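/- arXiv:2110.13197 — 2 statements merged into one kernel-verified Lean document; each statement's English description precedes it below -/
import Mathlib

section
/- Let G be a finite simple graph, v a vertex of G, and h ∈ ℕ. Then for every t ≤ h, the t-round WL color of v computed in G equals the t-round WL color of v computed within the induced subgraph B_G(v,h): c_t^G(v) = c_t^{B_G(v,h)}(v). -/
/-- The type of 1-WL colors after `t` refinement rounds. -/
def WLColor : ℕ → Type
  | 0 => Unit
  | t + 1 => WLColor t × Multiset (WLColor t)

/-- The `t`-round 1-WL color of a vertex `v` in a finite simple graph `G`:
`c_0(v)` is a fixed constant, and `c_{t+1}(v) = (c_t(v), {{c_t(u) : u ∈ N(v)}})`. -/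
noncomputable def wlColor {V : Type} [Finite V] (G : SimpleGraph V) : (t : ℕ) → V → WLColor t
  | 0, _ => ()
  | t + 1, v =>
    (wlColor G t v, ((Set.toFinite {u | G.Adj v u}).toFinset.val).map (wlColor G t))

/-- `ball G v h` is the set of vertices at shortest-path distance at most `h` from `v`. -/
def ball {V : Type} (G : SimpleGraph V) (v : V) (h : ℕ) : Set V :=
  {u | G.Reachable v u ∧ G.dist v u ≤ h}

/-- `sphere G v k` is the set `Q_{v,G}^k` of vertices at shortest-path distance exactly `k`. -/
def sphere {V : Type} (G : SimpleGraph V) (v : V) (k : ℕ) : Set V :=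
  {u | G.Reachable v u ∧ G.dist v u = k}

/-- A graph is `r`-regular if every vertex has exactly `r` neighbors. -/
def IsRegularGraph {V : Type} (G : SimpleGraph V) (r : ℕ) : Prop :=
  ∀ v : V, Nat.card {u : V // G.Adj v u} = r

lemma self_mem_ball {V : Type} (G : SimpleGraph V) (v : V) (h : ℕ) : v ∈ ball G v h :=
  ⟨SimpleGraph.Reachable.refl v, by simp [SimpleGraph.dist_self]⟩

/-- The multiset of `t`-round WL colors of all vertices of `G`. -/
noncomputable def graphColorMultiset {V : Type} [Finite V] (G : SimpleGraph V) (t : ℕ) :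
    Multiset (WLColor t) :=
  haveI := Fintype.ofFinite V
  Finset.univ.val.map (wlColor G t)

/-- The `(h,L)` subgraph-WL node representation of `w`: the multiset of `L`-round WL colors
of the vertices of the height-`h` rooted subgraph `B_G(w,h)`, computed within that subgraph. -/
noncomputable def subgraphWLNodeRep {V : Type} [Finite V] (G : SimpleGraph V) (h L : ℕ)
    (w : V) : Multiset (WLColor L) :=
  graphColorMultiset (G.induce (ball G w h)) L

/-- The `(h,L)` subgraph-WL graph representation of `G`. -/
noncomputable def subgraphWLGraphRep {V : Type} [Finite V] (G : SimpleGraph V) (h L : ℕ) :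
    Multiset (Multiset (WLColor L)) :=
  haveI := Fintype.ofFinite V
  Finset.univ.val.map (subgraphWLNodeRep G h L)

/-- `a_{v,G}^{i,k}`: the number of vertices in `Q_{v,G}^{k+1}` with exactly `i` neighbors in
`Q_{v,G}^k`.  The edge configuration `C_{v,G}^k` is the sequence `i ↦ a_{v,G}^{i,k}` (`i ≥ 1`). -/
noncomputable def edgeConfig {V : Type} (G : SimpleGraph V) (v : V) (k i : ℕ) : ℕ :=
  Nat.card {u : V // u ∈ sphere G v (k + 1) ∧
    Nat.card {w : V // w ∈ sphere G v k ∧ G.Adj u w} = i}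

/-- The number of edges of `G` with one endpoint in `Q_{v,G}^i` and the other in `Q_{v,G}^{i+1}`. -/
noncomputable def crossEdges {V : Type} (G : SimpleGraph V) (v : V) (i : ℕ) : ℕ :=
  Nat.card {p : V × V // p.1 ∈ sphere G v i ∧ p.2 ∈ sphere G v (i + 1) ∧ G.Adj p.1 p.2}

/-!
The color of a vertex after `t + 1` rounds depends only on the colors of its closed neighborhood
after `t` rounds. So if an induced subgraph contains the ball of radius `t + 1` around a vertex, it
contains all its neighbors together with their balls of radius `t`, and induction on `t` with the
vertex varying shows that the subgraph determines the `t`-round color of every vertex whose ball of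
radius `t` it contains.
-/

section Ball

variable {V : Type} {G : SimpleGraph V} {u v : V} {k l : ℕ}

lemma mem_ball_iff_edist_le : u ∈ ball G v k ↔ G.edist v u ≤ k := by
  constructor
  · rintro ⟨hreach, hdist⟩
    rw [← hreach.coe_dist_eq_edist]
    exact_mod_cast hdist
  · intro hedist
    have hreach : G.Reachable v u :=
      SimpleGraph.reachable_of_edist_ne_top (ne_top_of_le_ne_top (ENat.natCast_ne_top k) hedist)
    rw [← hreach.coe_dist_eq_edist] at hedist
    exact ⟨hreach, by exact_mod_cast hedist⟩

lemma ball_subset_ball_of_edist_add_le (h : G.edist u v + k ≤ l) : ball G v k ⊆ ball G u l := by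
  intro w hw
  rw [mem_ball_iff_edist_le] at hw ⊢
  calc
    G.edist u w ≤ G.edist u v + G.edist v w := SimpleGraph.edist_triangle
    _ ≤ G.edist u v + k := by gcongr
    _ ≤ l := h

lemma ball_subset_ball (h : k ≤ l) : ball G v k ⊆ ball G v l :=
  ball_subset_ball_of_edist_add_le (by simpa using h)

lemma ball_subset_ball_succ_of_adj (h : G.Adj u v) : ball G v k ⊆ ball G u (k + 1) :=
  ball_subset_ball_of_edist_add_le <| by
    rw [SimpleGraph.edist_eq_one_iff_adj.mpr h, add_comm, Nat.cast_add_one]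

lemma neighborSet_subset_ball_succ : G.neighborSet v ⊆ ball G v (k + 1) :=
  fun u hu ↦ ball_subset_ball_succ_of_adj hu (self_mem_ball G u k)

end Ball

lemma bijOn_neighborSet_of_neighborSet_subset_range {V W : Type*} {G : SimpleGraph V}
    {H : SimpleGraph W} (f : H ↪g G) {w : W} (h : G.neighborSet (f w) ⊆ Set.range f) :
    Set.BijOn f (H.neighborSet w) (G.neighborSet (f w)) := by
  have himage : f '' H.neighborSet w = G.neighborSet (f w) := by
    rw [← f.preimage_neighborSet, Set.image_preimage_eq_of_subset h]
  exact himage ▸ f.injective.injOn.bijOn_image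

section WLColor

variable {V W : Type} [Finite V] [Finite W] {G : SimpleGraph V} {H : SimpleGraph W} {t : ℕ}

lemma wlColor_succ_eq_of_bijOn_neighborSet {f : W → V} {v : V} {w : W}
    (hf : Set.BijOn f (H.neighborSet w) (G.neighborSet v))
    (hself : wlColor G t v = wlColor H t w)
    (hneighbor : ∀ x ∈ H.neighborSet w, wlColor G t (f x) = wlColor H t x) :
    wlColor G (t + 1) v = wlColor H (t + 1) w := by
  refine Prod.ext hself (Multiset.map_eq_map_of_bij_of_nodup _ _
    (Finset.nodup _) (Finset.nodup _) (fun x _ ↦ f x) ?_ ?_ ?_ ?_).symm <;>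
    simp only [Finset.mem_val, Set.Finite.mem_toFinset]
  · exact fun x hx ↦ hf.mapsTo hx
  · exact fun x hx y hy hxy ↦ hf.injOn hx hy hxy
  · intro y hy
    obtain ⟨x, hx, hxy⟩ := hf.surjOn hy
    exact ⟨x, hx, hxy⟩
  · exact fun x hx ↦ (hneighbor x hx).symm

theorem wlColor_apply_eq_of_ball_subset_range (f : H ↪g G) {w : W}
    (h : ball G (f w) t ⊆ Set.range f) : wlColor G t (f w) = wlColor H t w := by
  induction t generalizing w with
  | zero => rfl
  | succ t ih =>
    have hbij : Set.BijOn f (H.neighborSet w) (G.neighborSet (f w)) :=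
      bijOn_neighborSet_of_neighborSet_subset_range f (neighborSet_subset_ball_succ.trans h)
    have hself : wlColor G t (f w) = wlColor H t w :=
      ih ((ball_subset_ball t.le_succ).trans h)
    refine wlColor_succ_eq_of_bijOn_neighborSet hbij hself fun x hx ↦ ih ?_
    exact (ball_subset_ball_succ_of_adj (hbij.mapsTo hx)).trans h

end WLColor

theorem wlColor_eq_wlColor_ball_general {V : Type} [Finite V] (G : SimpleGraph V) (v : V)
    {s : Set V} {t : ℕ} (h : ball G v t ⊆ s) :
    wlColor G t v = wlColor (G.induce s) t ⟨v, h (self_mem_ball G v t)⟩ :=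
  wlColor_apply_eq_of_ball_subset_range (SimpleGraph.Embedding.induce s)
    (w := ⟨v, h (self_mem_ball G v t)⟩) (h.trans Subtype.range_coe.superset)

/-- For every `t ≤ h`, the `t`-round WL color of `v` computed in `G` equals
the `t`-round WL color of `v` computed within the induced subgraph `B_G(v,h)`. -/
theorem wlColor_eq_wlColor_ball {V : Type} [Finite V] (G : SimpleGraph V) (v : V) (h : ℕ) :
    ∀ t : ℕ, t ≤ h →
      wlColor G t v = wlColor (G.induce (ball G v h)) t ⟨v, self_mem_ball G v h⟩ := by
  intro t ht
  exact wlColor_eq_wlColor_ball_general G v (ball_subset_ball ht)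
end

section
/- Fix a constant 0 < ε < 1. There exists N such that for every even integer n ≥ N there exist two non-isomorphic n-vertex 3-regular simple graphs G₁ and G₂ such that for every t ∈ ℕ the multiset of t-round WL colors of G₁ equals that of G₂ (so 1-WL fails to distinguish them), yet the (h,L) subgraph-WL graph representations of G₁ and G₂ differ, where h = ⌈(1/2 + ε)·log n / log(2 − ε)⌉ and L = ⌈ε·log n / log(2 − ε)⌉. (Hence NGNN is strictly more powerful than 1-WL and message passing GNNs.) -/
/-!
Colour refinement gives every vertex of a regular graph the same colour, so it cannot tell two
regular graphs with the same order and degree apart. Subgraph representations still record the sizes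
of balls. A component of order `4` bounds every ball inside it by `4`, whereas in a connected cubic
graph on more than `4` vertices a ball of radius at least `2` strictly contains the closed
neighborhood of its center, and so has more than `4` vertices. The disjoint union of `K₄` with a
prism, against a single prism of the same order, therefore settles the matter as soon as `h ≥ 2`.
-/

open SimpleGraph hiding ball

variable {V W : Type} {G : SimpleGraph V} {H : SimpleGraph W} {r s h L : ℕ}

lemma IsRegularGraph.ncard_neighborSet (hG : IsRegularGraph G r) (v : V) :
    (G.neighborSet v).ncard = r := by
  rw [← Nat.card_coe_set_eq]
  exact hG v

lemma isRegularGraph_iff_isRegularOfDegree [G.LocallyFinite] :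
    IsRegularGraph G r ↔ G.IsRegularOfDegree r := by
  refine forall_congr' fun v => ?_
  rw [← G.card_neighborSet_eq_degree v, ← Nat.card_eq_fintype_card]
  rfl

lemma IsRegularGraph.of_iso (hG : IsRegularGraph G r) (f : G ≃g H) : IsRegularGraph H r := by
  intro w
  rw [← hG (f.symm w)]
  exact Nat.card_congr (f.symm.mapNeighborSet w)

lemma IsRegularGraph.sum (hG : IsRegularGraph G r) (hH : IsRegularGraph H r) :
    IsRegularGraph (G ⊕g H) r := by
  rintro (v | w)
  · change Nat.card ((G ⊕g H).neighborSet (.inl v)) = r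
    rw [neighborSet_sum_inl, Nat.card_coe_set_eq,
      Set.ncard_image_of_injective _ Sum.inl_injective, hG.ncard_neighborSet]
  · change Nat.card ((G ⊕g H).neighborSet (.inr w)) = r
    rw [neighborSet_sum_inr, Nat.card_coe_set_eq,
      Set.ncard_image_of_injective _ Sum.inr_injective, hH.ncard_neighborSet]

lemma IsRegularGraph.boxProd [Finite V] [Finite W] (hG : IsRegularGraph G r)
    (hH : IsRegularGraph H s) : IsRegularGraph (G □ H) (r + s) := by
  classical
  have := Fintype.ofFinite V
  have := Fintype.ofFinite W
  rw [isRegularGraph_iff_isRegularOfDegree] at hG hH ⊢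
  intro x
  rw [degree_boxProd, hG.degree_eq, hH.degree_eq]

lemma isRegularGraph_top (n : ℕ) : IsRegularGraph (⊤ : SimpleGraph (Fin (n + 1))) n :=
  isRegularGraph_iff_isRegularOfDegree.2 <| by simpa using! IsRegularOfDegree.top (V := Fin (n + 1))

/-- The color shared by all vertices of an `r`-regular graph after `t` rounds of refinement. -/
def regularColor (r : ℕ) : (t : ℕ) → WLColor t
  | 0 => ()
  | t + 1 => (regularColor r t, Multiset.replicate r (regularColor r t))

lemma IsRegularGraph.wlColor_eq [Finite V] (hG : IsRegularGraph G r) (t : ℕ) :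
    wlColor G t = fun _ => regularColor r t := by
  induction t with
  | zero => rfl
  | succ t ih =>
    funext v
    have card_neighbors : (Set.toFinite {u | G.Adj v u}).toFinset.val.card = r := by
      rw [Finset.card_val, ← Set.ncard_eq_toFinset_card]
      exact hG.ncard_neighborSet v
    simp only [wlColor, ih, Multiset.map_const', card_neighbors]
    rfl

lemma card_graphColorMultiset [Finite V] (G : SimpleGraph V) (t : ℕ) :
    (graphColorMultiset G t).card = Nat.card V := by
  let := Fintype.ofFinite V
  rw [graphColorMultiset, Multiset.card_map, Nat.card_eq_fintype_card]
  rfl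

lemma IsRegularGraph.graphColorMultiset_eq [Finite V] (hG : IsRegularGraph G r) (t : ℕ) :
    graphColorMultiset G t = Multiset.replicate (Nat.card V) (regularColor r t) := by
  refine Multiset.eq_replicate.2 ⟨card_graphColorMultiset G t, fun c hc => ?_⟩
  obtain ⟨v, -, rfl⟩ := Multiset.mem_map.1 hc
  rw [hG.wlColor_eq]

lemma mem_ball_iff_exists_walk {u v : V} :
    u ∈ ball G v h ↔ ∃ p : G.Walk v u, p.length ≤ h := by
  constructor
  · rintro ⟨hr, hd⟩
    obtain ⟨p, hp⟩ := hr.exists_walk_length_eq_dist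
    exact ⟨p, hp.trans_le hd⟩
  · rintro ⟨p, hp⟩
    exact ⟨p.reachable, (dist_le p).trans hp⟩

lemma monotone_ball (v : V) : Monotone (ball G v) :=
  fun _ _ hle _ hu => ⟨hu.1, hu.2.trans hle⟩

lemma ball_one_eq_insert (v : V) : ball G v 1 = insert v (G.neighborSet v) := by
  ext u
  constructor
  · rintro ⟨hr, hd⟩
    rcases Nat.le_one_iff_eq_zero_or_eq_one.1 hd with h0 | h1
    · exact .inl (hr.dist_eq_zero_iff.1 h0).symm
    · exact .inr (dist_eq_one_iff_adj.1 h1)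
  · rintro (rfl | hadj)
    · exact self_mem_ball G u 1
    · exact ⟨hadj.reachable, (dist_eq_one_iff_adj.2 hadj).le⟩

lemma ball_subset_supp (v : V) (h : ℕ) : ball G v h ⊆ (G.connectedComponentMk v).supp :=
  fun _ hu => ConnectedComponent.sound hu.1.symm

lemma ball_ssubset_ball_succ (hG : G.Connected) {v : V} (hne : ball G v h ≠ Set.univ) :
    ball G v h ⊂ ball G v (h + 1) := by
  obtain ⟨w, hw⟩ := (Set.ne_univ_iff_exists_notMem _).1 hne
  obtain ⟨p⟩ := hG v w
  obtain ⟨d, -, hfst, hsnd⟩ := p.exists_boundary_dart _ (self_mem_ball G v h) hw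
  obtain ⟨q, hq⟩ := mem_ball_iff_exists_walk.1 hfst
  have hsnd' : d.snd ∈ ball G v (h + 1) :=
    mem_ball_iff_exists_walk.2 ⟨q.concat d.adj, by simpa [Walk.length_concat] using hq⟩
  exact (Set.ssubset_iff_of_subset (monotone_ball v h.le_succ)).2 ⟨_, hsnd', hsnd⟩

lemma IsRegularGraph.ncard_ball_one [Finite V] (hG : IsRegularGraph G r) (v : V) :
    (ball G v 1).ncard = r + 1 := by
  rw [ball_one_eq_insert, Set.ncard_insert_of_notMem G.notMem_neighborSet_self,
    hG.ncard_neighborSet]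

lemma IsRegularGraph.lt_ncard_ball [Finite V] (hG : IsRegularGraph G r) (hconn : G.Connected)
    (hcard : r + 1 < Nat.card V) (hh : 2 ≤ h) (v : V) : r + 1 < (ball G v h).ncard := by
  have hne : ball G v 1 ≠ Set.univ := by
    intro huniv
    rw [← hG.ncard_ball_one v, huniv, Set.ncard_univ] at hcard
    exact hcard.false
  calc r + 1 = (ball G v 1).ncard := (hG.ncard_ball_one v).symm
    _ < (ball G v 2).ncard := Set.ncard_lt_ncard (ball_ssubset_ball_succ hconn hne)
    _ ≤ (ball G v h).ncard := Set.ncard_le_ncard (monotone_ball v hh)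

lemma card_subgraphWLNodeRep [Finite V] (G : SimpleGraph V) (h L : ℕ) (v : V) :
    (subgraphWLNodeRep G h L v).card = (ball G v h).ncard := by
  rw [subgraphWLNodeRep, card_graphColorMultiset, Nat.card_coe_set_eq]

lemma mem_subgraphWLGraphRep [Finite V] {c : Multiset (WLColor L)} :
    c ∈ subgraphWLGraphRep G h L ↔ ∃ v, subgraphWLNodeRep G h L v = c := by
  simp [subgraphWLGraphRep]

lemma exists_ncard_ball_eq_of_subgraphWLGraphRep_eq [Finite V] [Finite W]
    (heq : subgraphWLGraphRep G h L = subgraphWLGraphRep H h L) (v : V) :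
    ∃ w, (ball H w h).ncard = (ball G v h).ncard := by
  obtain ⟨w, hw⟩ := mem_subgraphWLGraphRep.1 (heq ▸ mem_subgraphWLGraphRep.2 ⟨v, rfl⟩)
  exact ⟨w, by rw [← card_subgraphWLNodeRep H h L, hw, card_subgraphWLNodeRep]⟩

theorem subgraphWLGraphRep_ne_of_ncard_supp_le [Finite V] [Finite W] (C : G.ConnectedComponent)
    (hC : C.supp.ncard ≤ r + 1) (hH : IsRegularGraph H r) (hconn : H.Connected)
    (hcard : r + 1 < Nat.card W) (hh : 2 ≤ h) :
    subgraphWLGraphRep G h L ≠ subgraphWLGraphRep H h L := by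
  intro heq
  obtain ⟨v, rfl⟩ := C.exists_rep
  obtain ⟨w, hw⟩ := exists_ncard_ball_eq_of_subgraphWLGraphRep_eq heq v
  have hsmall : (ball G v h).ncard ≤ r + 1 :=
    (Set.ncard_le_ncard (ball_subset_supp v h)).trans hC
  exact (hH.lt_ncard_ball hconn hcard hh w).not_ge (hw.trans_le hsmall)

/-- The prism over a cycle of length `k + 3`; the shift keeps the cycle nondegenerate, so that the
prism is cubic for every `k`. -/
def prism (k : ℕ) : SimpleGraph (Fin (k + 3) × Fin 2) :=
  cycleGraph (k + 3) □ ⊤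

lemma connected_prism (k : ℕ) : (prism k).Connected :=
  cycleGraph_connected.boxProd connected_top

lemma isRegularGraph_prism (k : ℕ) : IsRegularGraph (prism k) 3 :=
  IsRegularGraph.boxProd
    (isRegularGraph_iff_isRegularOfDegree.2 fun _ => cycleGraph_degree_three_le)
    (isRegularGraph_top 1)

lemma ncard_supp_connectedComponentMk_inl_le [Finite V] (G : SimpleGraph V) (H : SimpleGraph W)
    (v : V) : ((G ⊕g H).connectedComponentMk (.inl v)).supp.ncard ≤ Nat.card V := by
  have hsub : ((G ⊕g H).connectedComponentMk (.inl v)).supp ⊆ Set.range Sum.inl := by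
    rintro (u | w) hmem
    · exact ⟨u, rfl⟩
    · exact absurd (ConnectedComponent.exact hmem).symm (not_reachable_sum_inl_inr v w)
  calc _ ≤ (Set.range (Sum.inl : V → V ⊕ W)).ncard := Set.ncard_le_ncard hsub
    _ = Nat.card V := by rw [← Nat.card_coe_set_eq, Nat.card_range_of_injective Sum.inl_injective]

theorem ngnn_strictly_more_powerful_than_wl_general {n : ℕ} (hn : 10 ≤ n) (heven : Even n) :
    ∃ G₁ G₂ : SimpleGraph (Fin n), IsRegularGraph G₁ 3 ∧ IsRegularGraph G₂ 3 ∧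
      ¬ Nonempty (G₁ ≃g G₂) ∧
      (∀ t, graphColorMultiset G₁ t = graphColorMultiset G₂ t) ∧
      ∀ h L, 2 ≤ h → subgraphWLGraphRep G₁ h L ≠ subgraphWLGraphRep G₂ h L := by
  obtain ⟨k, rfl⟩ : ∃ k, n = 2 * (k + 5) := by
    obtain ⟨m, rfl⟩ := heven
    exact ⟨m - 5, by omega⟩
  let K : SimpleGraph (Fin 4) := ⊤
  let e₁ := (K ⊕g prism k).overFinIso (n := 2 * (k + 5)) (by simp; ring)
  let e₂ := (prism (k + 2)).overFinIso (n := 2 * (k + 5)) (by simp; ring)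
  have reg₁ := ((isRegularGraph_top 3).sum (isRegularGraph_prism k)).of_iso e₁
  have reg₂ := (isRegularGraph_prism (k + 2)).of_iso e₂
  have conn₂ := e₂.connected_iff.1 (connected_prism (k + 2))
  refine ⟨_, _, reg₁, reg₂, ?_, fun t => ?_, fun h L hh => ?_⟩
  · rintro ⟨f⟩
    exact not_connected_sum (e₁.connected_iff.2 (f.connected_iff.2 conn₂))
  · rw [reg₁.graphColorMultiset_eq, reg₂.graphColorMultiset_eq]
  · let C := (K ⊕g prism k).connectedComponentMk (.inl 0)
    have hC : (e₁.connectedComponentEquiv C).supp.ncard ≤ 3 + 1 := by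
      rw [← Nat.card_coe_set_eq, ← Nat.card_congr (ConnectedComponent.isoEquivSupp e₁ C)]
      simpa using! ncard_supp_connectedComponentMk_inl_le K (prism k) 0
    exact subgraphWLGraphRep_ne_of_ncard_supp_le _ hC reg₂ conn₂ (by simp; omega) hh

lemma two_le_ceil_log_div_log {ε : ℝ} (hε0 : 0 < ε) (hε1 : ε < 1) {n : ℕ} (hn : 4 ≤ n) :
    2 ≤ ⌈((1 : ℝ) / 2 + ε) * Real.log n / Real.log (2 - ε)⌉₊ := by
  have hlog_pos : 0 < Real.log (2 - ε) := Real.log_pos (by linarith)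
  have hlog_two : 0 < Real.log 2 := Real.log_pos one_lt_two
  refine Nat.succ_le_of_lt (Nat.lt_ceil.2 ?_)
  rw [Nat.cast_one, one_lt_div hlog_pos]
  calc Real.log (2 - ε) ≤ Real.log 2 := Real.log_le_log (by linarith) (by linarith)
    _ < (1 / 2 + ε) * (2 * Real.log 2) := by nlinarith
    _ = (1 / 2 + ε) * Real.log 4 := by
      rw [show (4 : ℝ) = 2 ^ 2 by norm_num, Real.log_pow, Nat.cast_ofNat]
    _ ≤ (1 / 2 + ε) * Real.log n := by
      gcongr
      exact_mod_cast hn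

/-- Fix `0 < ε < 1`.  There is `N` such that for every even `n ≥ N` there
exist two non-isomorphic `n`-vertex 3-regular simple graphs `G₁, G₂` with equal multisets of
`t`-round WL colors for every `t` (1-WL fails), whose `(h,L)` subgraph-WL graph
representations nevertheless differ, where `h = ⌈(1/2 + ε) log n / log(2-ε)⌉` and
`L = ⌈ε log n / log(2-ε)⌉`: NGNN is strictly more powerful than 1-WL. -/
theorem ngnn_strictly_more_powerful_than_wl (ε : ℝ) (hε0 : 0 < ε) (hε1 : ε < 1) :
    ∃ N : ℕ, ∀ n : ℕ, N ≤ n → Even n →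
      ∃ G₁ G₂ : SimpleGraph (Fin n), IsRegularGraph G₁ 3 ∧ IsRegularGraph G₂ 3 ∧
        (¬ Nonempty (G₁ ≃g G₂)) ∧
        (∀ t : ℕ, graphColorMultiset G₁ t = graphColorMultiset G₂ t) ∧
        subgraphWLGraphRep G₁ (⌈((1 : ℝ) / 2 + ε) * Real.log n / Real.log (2 - ε)⌉₊)
            (⌈ε * Real.log n / Real.log (2 - ε)⌉₊) ≠
          subgraphWLGraphRep G₂ (⌈((1 : ℝ) / 2 + ε) * Real.log n / Real.log (2 - ε)⌉₊)
            (⌈ε * Real.log n / Real.log (2 - ε)⌉₊) := by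
  refine ⟨10, fun n hn heven => ?_⟩
  obtain ⟨G₁, G₂, reg₁, reg₂, hiso, hwl, hsub⟩ :=
    ngnn_strictly_more_powerful_than_wl_general hn heven
  exact ⟨G₁, G₂, reg₁, reg₂, hiso, hwl, hsub _ _ (two_le_ceil_log_div_log hε0 hε1 (by omega))⟩
end
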